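/- Let n ≥ 1, let 1 ≤ p < ∞, and let Ω ⊆ ℝⁿ be a Lebesgue measurable set for which there exist τ > 1, points y_j ∈ ℝⁿ and radii R_j with R_j strictly increasing to ∞ such that B(y_j, τR_j) ⊆ Ω for all j ∈ ℕ and B(y_j, τR_j) ∩ B(y_k, τR_k) = ∅ for j ≠ k. Let a ∈ L^∞(ℝⁿ;ℂ) and suppose there is M ≥ 0 such that ‖F^{-1}(a·Fu)‖_{L^p(ℝⁿ)} ≤ M‖u‖_{L^p(ℝⁿ)} for all u ∈ L²(ℝⁿ) ∩ L^p(ℝⁿ). Then the set G := { W_Ω(a)u : u ∈ L²(Ω) ∩ L^p(Ω), ‖u‖_{L^p(Ω)} ≤ 1 } ⊆ L^p(Ω) satisfies κ(G) ≥ ‖a‖_{L^∞(ℝⁿ)}. -/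

import Mathlib

open MeasureTheory Filter Metric Complex ENNReal NNReal

noncomputable section

abbrev Eucl (n : ℕ) := EuclideanSpace ℝ (Fin n)

/-- The Fourier integral with the convention `(Fu)(ξ) = ∫ u(x) e^{-i x·ξ} dx`. -/
def fourierInt {n : ℕ} (u : Eucl n → ℂ) (ξ : Eucl n) : ℂ :=
  ∫ x : Eucl n, Complex.exp (-(Complex.I * ((inner ℝ x ξ : ℝ) : ℂ))) * u x

/-- The inverse Fourier integral `(F⁻¹u)(x) = (2π)^{-n} ∫ u(ξ) e^{i x·ξ} dξ`. -/
def fourierIntInv {n : ℕ} (u : Eucl n → ℂ) (x : Eucl n) : ℂ :=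
  (((2 * Real.pi) ^ n : ℝ)⁻¹ : ℂ) • ∫ ξ : Eucl n, Complex.exp (Complex.I * ((inner ℝ x ξ : ℝ) : ℂ)) * u ξ

/-- A pair consisting of the Fourier–Plancherel transform on `L²(ℝⁿ;ℂ)` and its inverse:
continuous linear maps on `L²` that are mutually inverse and agree with the Fourier
integral (resp. the inverse Fourier integral) on `L¹ ∩ L²`.  Such a pair exists and is
unique by Plancherel's theorem. -/
structure FourierPlancherelPair (n : ℕ) where
  F : Lp ℂ 2 (volume : Measure (Eucl n)) →L[ℂ] Lp ℂ 2 (volume : Measure (Eucl n))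
  Finv : Lp ℂ 2 (volume : Measure (Eucl n)) →L[ℂ] Lp ℂ 2 (volume : Measure (Eucl n))
  inv_comp : ∀ u, Finv (F u) = u
  comp_inv : ∀ u, F (Finv u) = u
  F_int : ∀ (u : Eucl n → ℂ), Integrable u → ∀ (hu2 : MemLp u 2 (volume : Measure (Eucl n))),
    (F (hu2.toLp u) : Eucl n → ℂ) =ᵐ[volume] fourierInt u
  Finv_int : ∀ (u : Eucl n → ℂ), Integrable u → ∀ (hu2 : MemLp u 2 (volume : Measure (Eucl n))),
    (Finv (hu2.toLp u) : Eucl n → ℂ) =ᵐ[volume] fourierIntInv u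

/-- Multiplication by an `L^∞` function as a map on `L²`. -/
def mulOp {n : ℕ} (a : Eucl n → ℂ) (ha : MemLp a ⊤ (volume : Measure (Eucl n)))
    (v : Lp ℂ 2 (volume : Measure (Eucl n))) : Lp ℂ 2 (volume : Measure (Eucl n)) :=
  (((Lp.memLp v).smul ha : MemLp (a • (v : Eucl n → ℂ)) 2 volume)).toLp _

/-- The Wiener–Hopf type operator `W_Ω(a) u = r_Ω F⁻¹ (a · F(e_Ω u))`, realised as a function
on `ℝⁿ` supported in `Ω` (i.e. `e_Ω W_Ω(a) u`). -/
def WOp {n : ℕ} (FP : FourierPlancherelPair n) (a : Eucl n → ℂ) (ha : MemLp a ⊤ (volume : Measure (Eucl n)))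
    (Ω : Set (Eucl n)) (u : Eucl n → ℂ) (hu : MemLp (Ω.indicator u) 2 (volume : Measure (Eucl n))) :
    Eucl n → ℂ :=
  Ω.indicator (FP.Finv (mulOp a ha (FP.F (hu.toLp _))) : Eucl n → ℂ)

end

structure GoodFn {n : ℕ} (v : Eucl n → ℂ) : Prop where
  cont : Continuous v
  supp : HasCompactSupport v
  intF : Integrable (fourierInt v)

noncomputable def symbOp {n : ℕ} (a : Eucl n → ℂ) (v : Eucl n → ℂ) : Eucl n → ℂ :=
  fourierIntInv (fun ξ => a ξ * fourierInt v ξ)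

theorem GoodFn.memLp {n : ℕ} {v : Eucl n → ℂ} (h : GoodFn v) (p : ℝ≥0∞) : MemLp v p volume :=
  h.cont.memLp_of_hasCompactSupport h.supp

theorem GoodFn.integrable {n : ℕ} {v : Eucl n → ℂ} (h : GoodFn v) : Integrable v :=
  h.cont.integrable_of_hasCompactSupport h.supp

theorem ae_bdd_of_memLp_top {n : ℕ} {a : Eucl n → ℂ} (ha : MemLp a ⊤ (volume : Measure (Eucl n))) :
    ∀ᵐ x, ‖a x‖ ≤ (eLpNorm a ⊤ volume).toReal := by
  filter_upwards [ae_le_eLpNormEssSup (f := a) (μ := (volume : Measure (Eucl n)))] with x hx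
  have h2 := ha.2
  rw [← eLpNorm_exponent_top] at hx
  have := ENNReal.toReal_mono h2.ne hx
  simpa using this

theorem fourierInt_smul {n : ℕ} (t : ℂ) (v : Eucl n → ℂ) (ξ : Eucl n) :
    fourierInt (fun x => t * v x) ξ = t * fourierInt v ξ := by
  unfold fourierInt
  rw [← integral_const_mul]
  congr 1; ext x; ring

theorem fourierInt_trans {n : ℕ} (y : Eucl n) (v : Eucl n → ℂ) (ξ : Eucl n) :
    fourierInt (fun x => v (x - y)) ξ =
      Complex.exp (-(Complex.I * ((inner ℝ y ξ : ℝ) : ℂ))) * fourierInt v ξ := by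
  unfold fourierInt
  rw [← integral_const_mul]
  rw [← integral_sub_right_eq_self (μ := (volume : Measure (Eucl n)))
    (fun x => cexp (-(I * ((inner ℝ y ξ : ℝ) : ℂ))) * (cexp (-(I * ((inner ℝ x ξ : ℝ) : ℂ))) * v x)) y]
  congr 1; ext x
  rw [← mul_assoc, ← Complex.exp_add, inner_sub_left]
  congr 2; push_cast; ring

theorem symbOp_smul {n : ℕ} (a : Eucl n → ℂ) (t : ℂ) (v : Eucl n → ℂ) :
    symbOp a (fun x => t * v x) = fun x => t * symbOp a v x := by
  ext x
  simp only [symbOp, fourierIntInv, fourierInt_smul, smul_eq_mul]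
  rw [mul_left_comm, ← integral_const_mul t]
  congr 2; ext ξ; ring

theorem symbOp_trans {n : ℕ} (a : Eucl n → ℂ) (y : Eucl n) (v : Eucl n → ℂ) :
    symbOp a (fun x => v (x - y)) = fun x => symbOp a v (x - y) := by
  ext x
  simp only [symbOp, fourierIntInv, fourierInt_trans, smul_eq_mul]
  congr 2; ext ξ
  have : cexp (I * ((inner ℝ (x - y) ξ : ℝ) : ℂ)) =
      cexp (I * ((inner ℝ x ξ : ℝ) : ℂ)) * cexp (-(I * ((inner ℝ y ξ : ℝ) : ℂ))) := by
    rw [← Complex.exp_add, inner_sub_left]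
    congr 1; push_cast; ring
  rw [this]; ring

theorem GoodFn.smul {n : ℕ} {v : Eucl n → ℂ} (h : GoodFn v) (t : ℂ) : GoodFn (fun x => t * v x) where
  cont := continuous_const.mul h.cont
  supp := h.supp.mul_left (f := fun _ => t)
  intF := by
    rw [show fourierInt (fun x => t * v x) = fun ξ => t * fourierInt v ξ from
      funext (fourierInt_smul t v)]
    exact h.intF.const_mul t

theorem GoodFn.trans {n : ℕ} {v : Eucl n → ℂ} (h : GoodFn v) (y : Eucl n) :
    GoodFn (fun x => v (x - y)) where
  cont := h.cont.comp (continuous_id.sub continuous_const)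
  supp := h.supp.comp_homeomorph (Homeomorph.subRight y)
  intF := by
    rw [show fourierInt (fun x => v (x - y)) = fun ξ => _ from
      funext (fourierInt_trans y v)]
    refine h.intF.bdd_mul (c := 1) ?_ ?_
    · apply Continuous.aestronglyMeasurable; fun_prop
    · refine Eventually.of_forall fun ξ => ?_
      rw [Complex.norm_exp]; simp

/-- explicit form of the operator on good functions -/
theorem symbOp_ae {n : ℕ} (FP : FourierPlancherelPair n) {a : Eucl n → ℂ}
    (ha : MemLp a ⊤ (volume : Measure (Eucl n))) {v : Eucl n → ℂ} (h : GoodFn v)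
    (hv2 : MemLp v 2 (volume : Measure (Eucl n))) :
    (FP.Finv (mulOp a ha (FP.F (hv2.toLp v))) : Eucl n → ℂ) =ᵐ[volume] symbOp a v := by
  have h1 := FP.F_int v h.integrable hv2
  have h2 : (a • (FP.F (hv2.toLp v) : Eucl n → ℂ)) =ᵐ[volume] fun ξ => a ξ * fourierInt v ξ := by
    filter_upwards [h1] with ξ hξ
    simp [hξ]
  have hm : MemLp (fun ξ => a ξ * fourierInt v ξ) 2 (volume : Measure (Eucl n)) :=
    (memLp_congr_ae h2).1 ((Lp.memLp (FP.F (hv2.toLp v))).smul ha)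
  have hi : Integrable (fun ξ => a ξ * fourierInt v ξ) :=
    h.intF.bdd_mul ha.1 (ae_bdd_of_memLp_top ha)
  have : mulOp a ha (FP.F (hv2.toLp v)) = hm.toLp _ := by
    unfold mulOp
    exact (MemLp.toLp_eq_toLp_iff _ _).2 h2
  rw [this]
  exact FP.Finv_int _ hi hm

/-- inversion formula -/
theorem inv_ae {n : ℕ} (FP : FourierPlancherelPair n) {v : Eucl n → ℂ} (h : GoodFn v) :
    fourierIntInv (fourierInt v) =ᵐ[volume] v := by
  have hv2 := h.memLp 2
  have h1 := FP.F_int v h.integrable hv2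
  have hm : MemLp (fourierInt v) 2 (volume : Measure (Eucl n)) :=
    (memLp_congr_ae h1).1 (Lp.memLp _)
  have h3 : FP.F (hv2.toLp v) = hm.toLp _ := by
    apply Lp.ext
    exact h1.trans hm.coeFn_toLp.symm
  have h4 := FP.Finv_int _ h.intF hm
  rw [← h3, FP.inv_comp] at h4
  exact h4.symm.trans hv2.coeFn_toLp

theorem approxId {n : ℕ} (ξ0 : Eucl n) (ψ w : Eucl n → ℝ) (hψ : Integrable ψ) (hψ0 : ∀ x, 0 ≤ ψ x)
    (C : ℝ) (hC : ∀ x, ψ x ≤ C) (hw : AEStronglyMeasurable w) (hw0 : ∀ x, 0 ≤ w x) (D : ℝ)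
    (hD : ∀ᵐ x, w x ≤ D)
    (hL : Tendsto (fun r => ⨍ y in closedBall ξ0 r, w y) (nhdsWithin 0 (Set.Ioi 0)) (nhds 0))
    (ε : ℝ) (hε : 0 < ε) :
    ∃ δ : ℝ, 0 < δ ∧ ∫ ξ, w ξ * ((δ ^ n)⁻¹ * ψ (δ⁻¹ • (ξ - ξ0))) < ε := by
  have hC0 : 0 ≤ C := (hψ0 0).trans (hC 0)
  have hD0 : 0 ≤ D := by
    obtain ⟨x, hx⟩ := hD.exists
    exact (hw0 x).trans hx
  -- choose K
  obtain ⟨K, hK0, hK⟩ : ∃ K : ℝ, 0 < K ∧ D * ∫ x in (closedBall (0 : Eucl n) K)ᶜ, ψ x < ε / 2 := by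
    have h1 : Tendsto (fun r : ℝ => ∫ x in closedBall (0 : Eucl n) r, ψ x) atTop (nhds (∫ x, ψ x)) :=
      (aecover_closedBall tendsto_id).integral_tendsto_of_countably_generated hψ
    have h2 : Tendsto (fun r : ℝ => D * ∫ x in (closedBall (0 : Eucl n) r)ᶜ, ψ x) atTop (nhds 0) := by
      have h3 := (h1.const_sub (∫ x, ψ x)).const_mul D
      simp only [sub_self, mul_zero] at h3
      refine h3.congr fun r => ?_
      rw [← integral_add_compl (measurableSet_closedBall (x := (0 : Eucl n)) (ε := r)) hψ]
      ring
    obtain ⟨K, h5, h6⟩ := ((h2.eventually (gt_mem_nhds (half_pos hε))).and (eventually_gt_atTop 0)).exists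
    exact ⟨K, h6, h5⟩
  set V := (volume : Measure (Eucl n)).real (ball 0 1) with hV
  have hscale : Tendsto (fun δ : ℝ => K * δ) (nhdsWithin 0 (Set.Ioi 0)) (nhdsWithin 0 (Set.Ioi 0)) := by
    apply tendsto_nhdsWithin_of_tendsto_nhds_of_eventually_within
    · have : Tendsto (fun δ : ℝ => K * δ) (nhds 0) (nhds (K * 0)) := tendsto_id.const_mul K
      rw [mul_zero] at this
      exact this.mono_left nhdsWithin_le_nhds
    · filter_upwards [self_mem_nhdsWithin] with δ hδ
      exact mul_pos hK0 hδ
  have h7 := (hL.comp hscale).const_mul (C * (K ^ n * V))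
  rw [mul_zero] at h7
  obtain ⟨δ, h8, hδ⟩ := ((h7.eventually (gt_mem_nhds (half_pos hε))).and self_mem_nhdsWithin).exists
  have hδ : 0 < δ := hδ
  refine ⟨δ, hδ, ?_⟩
  have hdn : 0 < (δ ^ n)⁻¹ := by positivity
  have hfr : Module.finrank ℝ (Eucl n) = n := by simp
  set B := closedBall ξ0 (K * δ) with hB
  set T := (closedBall (0 : Eucl n) K)ᶜ with hT
  have hTm : MeasurableSet T := measurableSet_closedBall.compl
  have hBm : MeasurableSet B := measurableSet_closedBall
  have hwB : IntegrableOn w B := by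
    refine Measure.integrableOn_of_bounded (M := D) (measure_closedBall_lt_top.ne) hw ?_
    filter_upwards [ae_restrict_of_ae hD] with x hx
    rwa [Real.norm_of_nonneg (hw0 x)]
  have hi1 : Integrable (fun ξ => C * (δ ^ n)⁻¹ * B.indicator w ξ) :=
    (hwB.integrable_indicator hBm).const_mul _
  have hi2 : Integrable (fun ξ => D * (δ ^ n)⁻¹ * T.indicator ψ (δ⁻¹ • (ξ - ξ0))) :=
    (((hψ.indicator hTm).comp_smul (inv_ne_zero hδ.ne')).comp_sub_right ξ0).const_mul _
  have hbd : ∀ᵐ ξ, w ξ * ((δ ^ n)⁻¹ * ψ (δ⁻¹ • (ξ - ξ0))) ≤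
      C * (δ ^ n)⁻¹ * B.indicator w ξ + D * (δ ^ n)⁻¹ * T.indicator ψ (δ⁻¹ • (ξ - ξ0)) := by
    filter_upwards [hD] with ξ hξ
    have key : ξ ∈ B ↔ δ⁻¹ • (ξ - ξ0) ∈ closedBall (0 : Eucl n) K := by
      rw [hB, mem_closedBall, mem_closedBall_zero_iff, dist_eq_norm, norm_smul, norm_inv,
        Real.norm_of_nonneg hδ.le, inv_mul_le_iff₀ hδ, mul_comm]
    by_cases hx : ξ ∈ B
    · rw [Set.indicator_of_mem hx, Set.indicator_of_notMem (by simpa [hT] using key.1 hx)]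
      have := mul_le_mul_of_nonneg_left (hC (δ⁻¹ • (ξ - ξ0))) (mul_nonneg (hw0 ξ) hdn.le)
      nlinarith
    · rw [Set.indicator_of_notMem hx, Set.indicator_of_mem (by
        simp only [hT, Set.mem_compl_iff]; exact fun h => hx (key.2 h))]
      have := mul_le_mul_of_nonneg_right hξ (mul_nonneg hdn.le (hψ0 (δ⁻¹ • (ξ - ξ0))))
      nlinarith
  have hnn : 0 ≤ᵐ[volume] fun ξ => w ξ * ((δ ^ n)⁻¹ * ψ (δ⁻¹ • (ξ - ξ0))) :=
    Eventually.of_forall fun ξ => mul_nonneg (hw0 _) (mul_nonneg hdn.le (hψ0 _))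
  have h9 := integral_mono_of_nonneg hnn (hi1.add hi2) hbd
  refine h9.trans_lt ?_
  simp only [Pi.add_apply]
  rw [integral_add hi1 hi2, integral_const_mul, integral_const_mul, integral_indicator hBm,
    integral_sub_right_eq_self (μ := (volume : Measure (Eucl n))) (fun ξ => T.indicator ψ (δ⁻¹ • ξ)) ξ0,
    Measure.integral_comp_inv_smul_of_nonneg _ _ hδ.le, integral_indicator hTm, hfr]
  have h10 : C * (δ ^ n)⁻¹ * ∫ x in B, w x = C * (K ^ n * V) * ⨍ y in B, w y := by
    rw [setAverage_eq, Measure.addHaar_real_closedBall _ _ (by positivity), hfr, smul_eq_mul, ← hV]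
    have : 0 < V := by
      rw [hV, measureReal_def]
      exact ENNReal.toReal_pos (measure_ball_pos _ _ one_pos).ne' measure_ball_lt_top.ne
    field_simp
    ring
  rw [h10, smul_eq_mul]
  have h11 : D * (δ ^ n)⁻¹ * (δ ^ n * ∫ x in T, ψ x) = D * ∫ x in T, ψ x := by
    field_simp
  rw [h11]
  simp only [Function.comp] at h8
  linarith

theorem exists_bump (n : ℕ) : ∃ φ : Eucl n → ℂ, GoodFn φ ∧ (∀ x, ‖x‖ < 1 → φ x = 1) ∧
    (∀ x, 2 ≤ ‖x‖ → φ x = 0) := by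
  let f : ContDiffBump (0 : Eucl n) := ⟨1, 2, one_pos, one_lt_two⟩
  have hcd : ContDiff ℝ (⊤ : ℕ∞) (fun x => ((f x : ℝ) : ℂ)) :=
    Complex.ofRealCLM.contDiff.comp f.contDiff
  have hcs : HasCompactSupport (fun x => ((f x : ℝ) : ℂ)) :=
    f.hasCompactSupport.comp_left (g := fun t : ℝ => (t : ℂ)) (by simp)
  refine ⟨fun x => ((f x : ℝ) : ℂ), ⟨hcd.continuous, hcs, ?_⟩, ?_, ?_⟩
  · have h1 := (FourierTransform.fourier (hcs.toSchwartzMap hcd)).integrable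
      (μ := (volume : Measure (Eucl n)))
    have h2 := h1.comp_smul (R := (2 * Real.pi)⁻¹) (by positivity)
    refine h2.congr (Eventually.of_forall fun ξ => ?_)
    simp only
    rw [SchwartzMap.fourier_coe, Real.fourier_eq']
    unfold fourierInt
    congr 1; ext x
    rw [smul_eq_mul]
    congr 2
    rw [inner_smul_right, show -2 * Real.pi * ((2 * Real.pi)⁻¹ * inner ℝ x ξ) = - inner ℝ x ξ by
      field_simp]
    push_cast; ring
  · intro x hx
    have := f.one_of_mem_closedBall (x := x) (by simpa [f] using hx.le)
    simp [this]
  · intro x hx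
    have := f.zero_of_le_dist (x := x) (by simpa [f] using hx)
    simp [this]

theorem fourierInt_mod {n : ℕ} (φ : Eucl n → ℂ) (ξ0 : Eucl n) (δ : ℝ) (hδ : 0 < δ) (ξ : Eucl n) :
    fourierInt (fun x => Complex.exp (I * ((inner ℝ x ξ0 : ℝ) : ℂ)) * φ (δ • x)) ξ =
      (((δ ^ n)⁻¹ : ℝ) : ℂ) * fourierInt φ (δ⁻¹ • (ξ - ξ0)) := by
  unfold fourierInt
  have h := Measure.integral_comp_smul (volume : Measure (Eucl n))
    (fun x => cexp (-(I * ((inner ℝ x (δ⁻¹ • (ξ - ξ0)) : ℝ) : ℂ))) * φ x) δ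
  have hfr : Module.finrank ℝ (Eucl n) = n := by simp
  rw [hfr, abs_of_pos (by positivity), Complex.real_smul] at h
  rw [← h]
  congr 1; ext x
  rw [← mul_assoc, ← Complex.exp_add, inner_smul_left, inner_smul_right, inner_sub_right]
  congr 2
  rw [show (starRingEnd ℝ) δ * (δ⁻¹ * (inner ℝ x ξ - inner ℝ x ξ0)) = inner ℝ x ξ - inner ℝ x ξ0 by
    simp; field_simp]
  push_cast; ring

theorem GoodFn.mod {n : ℕ} {φ : Eucl n → ℂ} (h : GoodFn φ) (ξ0 : Eucl n) (δ : ℝ) (hδ : 0 < δ) :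
    GoodFn (fun x => Complex.exp (I * ((inner ℝ x ξ0 : ℝ) : ℂ)) * φ (δ • x)) where
  cont := by
    have := h.cont
    fun_prop
  supp := by
    refine HasCompactSupport.mul_left (f := fun x => Complex.exp (I * ((inner ℝ x ξ0 : ℝ) : ℂ))) ?_
    exact h.supp.comp_smul hδ.ne'
  intF := by
    refine Integrable.congr ?_ (Eventually.of_forall fun ξ => (fourierInt_mod φ ξ0 δ hδ ξ).symm)
    exact ((h.intF.comp_smul (inv_ne_zero hδ.ne')).comp_sub_right ξ0).const_mul _

theorem norm_fourierInt_le {n : ℕ} (φ : Eucl n → ℂ) (ξ : Eucl n) :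
    ‖fourierInt φ ξ‖ ≤ ∫ x, ‖φ x‖ := by
  unfold fourierInt
  refine (norm_integral_le_integral_norm _).trans (le_of_eq ?_)
  congr 1; ext x
  rw [norm_mul, Complex.norm_exp]; simp

theorem exists_lebesgue_point {n : ℕ} {a : Eucl n → ℂ}
    (ha : MemLp a ⊤ (volume : Measure (Eucl n))) {c : ℝ≥0∞} (hc : c < eLpNorm a ⊤ volume) :
    ∃ ξ0, c < ‖a ξ0‖ₑ ∧ Tendsto (fun r => ⨍ y in closedBall ξ0 r, ‖a y - a ξ0‖)
      (nhdsWithin 0 (Set.Ioi 0)) (nhds 0) := by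
  have hloc : LocallyIntegrable a (volume : Measure (Eucl n)) := ha.locallyIntegrable (by simp)
  have h1 := IsUnifLocDoublingMeasure.ae_tendsto_average_norm_sub (volume : Measure (Eucl n)) hloc 1
  have h2 : ∃ᶠ x in ae (volume : Measure (Eucl n)), c < ‖a x‖ₑ := by
    intro h
    simp only [not_lt] at h
    rw [eLpNorm_exponent_top] at hc
    exact absurd (essSup_le_of_ae_le c h) (not_le.2 hc)
  obtain ⟨ξ0, h3, h4⟩ := (h2.and_eventually h1).exists
  refine ⟨ξ0, h3, h4 (fun _ => ξ0) id tendsto_id ?_⟩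
  filter_upwards [self_mem_nhdsWithin] with δ hδ
  simpa using (le_of_lt hδ)

theorem near_ext {n : ℕ} (FP : FourierPlancherelPair n) {p : ℝ≥0∞} (hp1 : 1 ≤ p) (hp : p ≠ ∞)
    {a : Eucl n → ℂ} (ha : MemLp a ⊤ (volume : Measure (Eucl n))) {c : ℝ≥0∞}
    (hc : c < eLpNorm a ⊤ volume) :
    ∃ u : Eucl n → ℂ, GoodFn u ∧ eLpNorm u p volume ≠ 0 ∧
      c * eLpNorm u p volume ≤ eLpNorm (symbOp a u) p volume := by
  obtain ⟨ξ0, hcξ, hL⟩ := exists_lebesgue_point ha hc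
  obtain ⟨φ, hφ, hφ1, hφ2⟩ := exists_bump n
  set κ : ℝ≥0∞ := ENNReal.ofReal (2 ^ n) ^ p.toReal⁻¹ with hκ
  have hp0 : p ≠ 0 := (zero_lt_one.trans_le hp1).ne'
  have hpr : 0 < p.toReal := ENNReal.toReal_pos hp0 hp
  have hκtop : κ ≠ ⊤ := ENNReal.rpow_ne_top_of_nonneg (by positivity) ENNReal.ofReal_ne_top
  have hκ0 : κ ≠ 0 := by
    rw [hκ]
    intro h
    rw [ENNReal.rpow_eq_zero_iff] at h
    rcases h with h | h
    · exact absurd (ENNReal.ofReal_eq_zero.1 h.1) (not_le.2 (by positivity))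
    · exact ENNReal.ofReal_ne_top h.1
  obtain ⟨ε, hε, hεc⟩ : ∃ ε : ℝ, 0 < ε ∧ c + κ * ENNReal.ofReal ε = ‖a ξ0‖ₑ := by
    set d := ‖a ξ0‖ₑ - c with hd
    have hd0 : d ≠ 0 := (tsub_pos_of_lt hcξ).ne'
    have hdt : d ≠ ⊤ := ENNReal.sub_ne_top enorm_ne_top
    have hq : d / κ ≠ ⊤ := ENNReal.div_ne_top hdt hκ0
    refine ⟨(d / κ).toReal, ENNReal.toReal_pos (ENNReal.div_ne_zero.2 ⟨hd0, hκtop⟩) hq, ?_⟩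
    rw [ENNReal.ofReal_toReal hq, ENNReal.mul_div_cancel hκ0 hκtop, hd, add_tsub_cancel_of_le hcξ.le]
  have hD : ∀ᵐ x, ‖a x - a ξ0‖ ≤ (eLpNorm a ⊤ volume).toReal + ‖a ξ0‖ := by
    filter_upwards [ae_bdd_of_memLp_top ha] with x hx
    exact (norm_sub_le _ _).trans (by gcongr)
  obtain ⟨δ, hδ, hE⟩ := approxId ξ0 (fun ξ => ‖fourierInt φ ξ‖) (fun ξ => ‖a ξ - a ξ0‖) hφ.intF.norm
    (fun _ => norm_nonneg _) _ (norm_fourierInt_le φ) (ha.1.sub aestronglyMeasurable_const).norm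
    (fun _ => norm_nonneg _) _ hD hL ε hε
  set u : Eucl n → ℂ := fun x => Complex.exp (I * ((inner ℝ x ξ0 : ℝ) : ℂ)) * φ (δ • x) with hu
  have hgood : GoodFn u := hφ.mod ξ0 δ hδ
  have hdiff : ∀ᵐ x, ‖symbOp a u x - a ξ0 * u x‖ ≤ ε := by
    filter_upwards [inv_ae FP hgood] with x hx
    rw [← hx]
    have hi1 : Integrable fun ξ => cexp (I * ((inner ℝ x ξ : ℝ) : ℂ)) * (a ξ * fourierInt u ξ) := by
      refine (hgood.intF.bdd_mul ha.1 (ae_bdd_of_memLp_top ha)).bdd_mul (c := 1) ?_ ?_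
      · apply Continuous.aestronglyMeasurable; fun_prop
      · refine Eventually.of_forall fun ξ => ?_
        rw [Complex.norm_exp]; simp
    have hi2 : Integrable fun ξ => cexp (I * ((inner ℝ x ξ : ℝ) : ℂ)) * fourierInt u ξ := by
      refine hgood.intF.bdd_mul (c := 1) ?_ ?_
      · apply Continuous.aestronglyMeasurable; fun_prop
      · refine Eventually.of_forall fun ξ => ?_
        rw [Complex.norm_exp]; simp
    have heq : symbOp a u x - a ξ0 * fourierIntInv (fourierInt u) x =
        (((2 * Real.pi) ^ n : ℝ)⁻¹ : ℂ) * ∫ ξ, (cexp (I * ((inner ℝ x ξ : ℝ) : ℂ)) * (a ξ * fourierInt u ξ)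
          - a ξ0 * (cexp (I * ((inner ℝ x ξ : ℝ) : ℂ)) * fourierInt u ξ)) := by
      rw [integral_sub hi1 (hi2.const_mul _), integral_const_mul]
      simp only [symbOp, fourierIntInv, smul_eq_mul]
      ring
    rw [heq, norm_mul]
    have hc1 : ‖(((2 * Real.pi) ^ n : ℝ)⁻¹ : ℂ)‖ ≤ 1 := by
      rw [norm_inv, Complex.norm_real, Real.norm_of_nonneg (by positivity)]
      apply inv_le_one_of_one_le₀
      apply one_le_pow₀
      linarith [Real.pi_gt_three]
    refine (mul_le_of_le_one_left (norm_nonneg _) hc1).trans ?_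
    refine (norm_integral_le_integral_norm _).trans (le_trans (le_of_eq ?_) hE.le)
    congr 1; ext ξ
    rw [show cexp (I * ((inner ℝ x ξ : ℝ) : ℂ)) * (a ξ * fourierInt u ξ)
          - a ξ0 * (cexp (I * ((inner ℝ x ξ : ℝ) : ℂ)) * fourierInt u ξ) =
        cexp (I * ((inner ℝ x ξ : ℝ) : ℂ)) * ((a ξ - a ξ0) * fourierInt u ξ) by ring,
      fourierInt_mod φ ξ0 δ hδ ξ, norm_mul, norm_mul, norm_mul, Complex.norm_exp, Complex.norm_real,
      Real.norm_of_nonneg (by positivity)]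
    simp
  have hms : AEStronglyMeasurable (symbOp a u) (volume : Measure (Eucl n)) :=
    (Lp.aestronglyMeasurable _).congr (symbOp_ae FP ha hgood (hgood.memLp 2))
  set B1 := ball (0 : Eucl n) δ⁻¹ with hB1
  set B2 := ball (0 : Eucl n) (2 * δ⁻¹) with hB2
  have hvol : volume B2 = ENNReal.ofReal (2 ^ n) * volume B1 := by
    rw [hB2, Measure.addHaar_ball_mul_of_pos _ _ two_pos]; simp [hB1]
  have hlow : volume B1 ^ p.toReal⁻¹ ≤ eLpNorm u p volume := by
    have h1 : eLpNorm (B1.indicator fun _ => (1 : ℝ)) p volume = volume B1 ^ p.toReal⁻¹ := by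
      rw [eLpNorm_indicator_const measurableSet_ball hp0 hp]; simp [hB1]
    rw [← h1]
    refine eLpNorm_mono fun x => ?_
    by_cases hx : x ∈ B1
    · have h3 : ‖δ • x‖ < 1 := by
        rw [norm_smul, Real.norm_of_nonneg hδ.le]
        rw [hB1, mem_ball_zero_iff] at hx
        calc δ * ‖x‖ < δ * δ⁻¹ := by gcongr
          _ = 1 := by field_simp
      rw [Set.indicator_of_mem hx, hu]
      simp only
      rw [hφ1 _ h3, mul_one, Complex.norm_exp]; simp
    · rw [Set.indicator_of_notMem hx]; simp
  have hu0 : eLpNorm u p volume ≠ 0 := by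
    intro h
    rw [h, nonpos_iff_eq_zero, ENNReal.rpow_eq_zero_iff] at hlow
    rcases hlow with h | h
    · exact (measure_ball_pos volume (0 : Eucl n) (inv_pos.2 hδ)).ne' h.1
    · exact absurd h.2 (not_lt.2 (by positivity))
  refine ⟨u, hgood, hu0, ?_⟩
  have hut : eLpNorm u p volume ≠ ⊤ := (hgood.memLp p).2.ne
  have hsupp : B2.indicator u = u := by
    rw [Set.indicator_eq_self]
    intro x hx
    by_contra hx2
    apply hx
    rw [hu]
    simp only
    rw [hφ2, mul_zero]
    rw [hB2, mem_ball_zero_iff, not_lt] at hx2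
    rw [norm_smul, Real.norm_of_nonneg hδ.le]
    calc 2 = δ * (2 * δ⁻¹) := by field_simp
      _ ≤ _ := by gcongr
  have hrestr : eLpNorm u p volume = eLpNorm u p (volume.restrict B2) := by
    rw [← eLpNorm_indicator_eq_eLpNorm_restrict measurableSet_ball, hsupp]
  have hmain : ‖a ξ0‖ₑ * eLpNorm u p volume ≤
      eLpNorm (symbOp a u) p volume + κ * ENNReal.ofReal ε * eLpNorm u p volume := by
    calc ‖a ξ0‖ₑ * eLpNorm u p volume = eLpNorm (a ξ0 • u) p (volume.restrict B2) := by
          rw [hrestr, eLpNorm_const_smul]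
      _ = eLpNorm (symbOp a u - (symbOp a u - a ξ0 • u)) p (volume.restrict B2) := by
          rw [_root_.sub_sub_cancel]
      _ ≤ eLpNorm (symbOp a u) p (volume.restrict B2) +
          eLpNorm (symbOp a u - a ξ0 • u) p (volume.restrict B2) :=
        eLpNorm_sub_le hms.restrict
          (hms.sub (hgood.cont.aestronglyMeasurable.const_smul _)).restrict hp1
      _ ≤ eLpNorm (symbOp a u) p volume +
          (volume.restrict B2) Set.univ ^ p.toReal⁻¹ * ENNReal.ofReal ε := by
        refine add_le_add (eLpNorm_mono_measure _ Measure.restrict_le_self) ?_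
        exact eLpNorm_le_of_ae_bound (ae_restrict_of_ae hdiff)
      _ ≤ _ := by
        rw [Measure.restrict_apply_univ, hvol, ENNReal.mul_rpow_of_nonneg _ _ (by positivity),
          ← hκ, mul_right_comm]
        gcongr
  rw [← hεc, add_mul] at hmain
  exact (ENNReal.add_le_add_iff_right (by finiteness)).1 hmain

theorem near_ext' {n : ℕ} (FP : FourierPlancherelPair n) {p : ℝ≥0∞} (hp1 : 1 ≤ p) (hp : p ≠ ∞)
    {a : Eucl n → ℂ} (ha : MemLp a ⊤ (volume : Measure (Eucl n))) {c : ℝ≥0∞}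
    (hc : c < eLpNorm a ⊤ volume) :
    ∃ u : Eucl n → ℂ, GoodFn u ∧ eLpNorm u p volume ≤ 1 ∧
      c ≤ eLpNorm (symbOp a u) p volume := by
  obtain ⟨u, hu, h0, h⟩ := near_ext FP hp1 hp ha hc
  have ht : eLpNorm u p volume ≠ ⊤ := (hu.memLp p).2.ne
  set N := eLpNorm u p volume with hN
  set t : ℂ := ((N.toReal⁻¹ : ℝ) : ℂ) with htdef
  have hte : ‖t‖ₑ = N⁻¹ := by
    have hpos := ENNReal.toReal_pos h0 ht
    rw [htdef, ← ofReal_norm, Complex.norm_real, Real.norm_of_nonneg (by positivity),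
      ENNReal.ofReal_inv_of_pos hpos, ENNReal.ofReal_toReal ht]
  refine ⟨_, hu.smul t, ?_, ?_⟩
  · have := eLpNorm_const_smul (p := p) (μ := volume) t u
    simp only [Pi.smul_def, smul_eq_mul] at this
    rw [this, hte, ← hN, ENNReal.inv_mul_cancel h0 ht]
  · rw [symbOp_smul]
    have := eLpNorm_const_smul (p := p) (μ := volume) t (symbOp a u)
    simp only [Pi.smul_def, smul_eq_mul] at this
    rw [this, hte, mul_comm, ← div_eq_mul_inv, ENNReal.le_div_iff_mul_le (Or.inl h0) (Or.inl ht)]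
    exact h


/-- lower bound for the Kuratowski measure of noncompactness of the image of
the unit ball of `L²(Ω) ∩ L^p(Ω)` under a Wiener–Hopf type operator.  The Kuratowski
measure is spelled out via covers by finitely many sets of diameter (in the `L^p`
pseudometric) at most `r`. -/
theorem kuratowski_lower_bound (n : ℕ) (hn : 1 ≤ n) (p : ℝ≥0∞) (hp1 : 1 ≤ p) (hp : p ≠ ∞)
    (Ω : Set (Eucl n)) (hΩ : MeasurableSet Ω)
    (τ : ℝ) (hτ : 1 < τ) (y : ℕ → Eucl n) (R : ℕ → ℝ) (hRpos : ∀ j, 0 < R j)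
    (hRmono : StrictMono R) (hRtop : Tendsto R atTop atTop)
    (hsub : ∀ j, Metric.ball (y j) (τ * R j) ⊆ Ω)
    (hdisj : ∀ j k, j ≠ k → Metric.ball (y j) (τ * R j) ∩ Metric.ball (y k) (τ * R k) = ∅)
    (a : Eucl n → ℂ) (ha : MemLp a ⊤ (volume : Measure (Eucl n)))
    (FP : FourierPlancherelPair n) (M : ℝ) (hM0 : 0 ≤ M)
    (hM : ∀ (u : Eucl n → ℂ) (hu2 : MemLp u 2 (volume : Measure (Eucl n))),
      MemLp u p volume →
      eLpNorm (FP.Finv (mulOp a ha (FP.F (hu2.toLp u))) : Eucl n → ℂ) p volume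
        ≤ ENNReal.ofReal M * eLpNorm u p volume) :
    eLpNorm a ⊤ volume ≤
      sInf { r : ℝ≥0∞ |
        ∃ 𝒞 : Finset (Set (Eucl n → ℂ)),
          (∀ (u : Eucl n → ℂ) (hu2 : MemLp (Ω.indicator u) 2 (volume : Measure (Eucl n))),
            MemLp (Ω.indicator u) p volume → eLpNorm (Ω.indicator u) p volume ≤ 1 →
              ∃ s ∈ 𝒞, WOp FP a ha Ω u hu2 ∈ s) ∧
          ∀ s ∈ 𝒞, ∀ f ∈ s, ∀ g ∈ s, eLpNorm (f - g) p volume ≤ r } := by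
  refine le_sInf ?_
  rintro r ⟨𝒞, hcov, hdiam⟩
  refine le_of_forall_lt fun c hc => ?_
  obtain ⟨c', hcc', hc'⟩ := exists_between hc
  refine hcc'.trans_le ?_
  obtain ⟨v, hv, hv1, hvc⟩ := near_ext' FP hp1 hp ha hc'
  refine hvc.trans ?_
  set h := symbOp a v with hh
  have hae := symbOp_ae FP ha hv (hv.memLp 2)
  have hms : AEStronglyMeasurable h (volume : Measure (Eucl n)) :=
    (Lp.aestronglyMeasurable _).congr hae
  have hhp : MemLp h p volume := by
    refine ⟨hms, ?_⟩
    rw [← eLpNorm_congr_ae hae]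
    exact (hM v (hv.memLp 2) (hv.memLp p)).trans_lt
      (ENNReal.mul_lt_top ENNReal.ofReal_lt_top (hv.memLp p).2)
  refine ENNReal.le_of_forall_pos_le_add fun ε hε _ => ?_
  obtain ⟨g, hg, hge, hgc, -⟩ := hhp.exists_hasCompactSupport_eLpNorm_sub_le hp
    (ε := ((ε / 2 : ℝ≥0) : ℝ≥0∞)) (by simpa using hε.ne')
  obtain ⟨ρ1, hρ1⟩ := hv.supp.isCompact.isBounded.subset_ball (0 : Eucl n)
  obtain ⟨ρ2, hρ2⟩ := hg.isCompact.isBounded.subset_ball (0 : Eucl n)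
  obtain ⟨N, hN⟩ := (hRtop.eventually_ge_atTop (max ρ1 ρ2)).exists_forall_of_atTop
  have hτR : ∀ j, R j ≤ τ * R j := fun j => by nlinarith [hRpos j]
  -- translates
  set w : ℕ → Eucl n → ℂ := fun j x => v (x - y j) with hw
  have hwg : ∀ j, GoodFn (w j) := fun j => hv.trans (y j)
  have hwind : ∀ j, N ≤ j → Ω.indicator (w j) = w j := by
    intro j hj
    rw [Set.indicator_eq_self]
    intro x hx
    apply hsub j
    have h1 := hρ1 (subset_tsupport v hx)
    rw [mem_ball_zero_iff] at h1
    rw [mem_ball, dist_eq_norm]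
    exact h1.trans_le ((le_max_left _ _).trans ((hN j hj).trans (hτR j)))
  have hmp : ∀ j, MeasurePreserving (fun x : Eucl n => x - y j) volume volume :=
    fun j => measurePreserving_sub_right volume (y j)
  have hwn : ∀ j, eLpNorm (w j) p volume = eLpNorm v p volume := fun j =>
    eLpNorm_comp_measurePreserving hv.cont.aestronglyMeasurable (hmp j)
  set hj : ℕ → Eucl n → ℂ := fun j x => h (x - y j) with hhj
  have hjn : ∀ j, eLpNorm (hj j) p volume = eLpNorm h p volume := fun j =>
    eLpNorm_comp_measurePreserving hms (hmp j)
  have hjm : ∀ j, AEStronglyMeasurable (hj j) (volume : Measure (Eucl n)) := fun j =>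
    hms.comp_measurePreserving (hmp j)
  -- tails
  have htail : ∀ j, N ≤ j → eLpNorm (hj j) p (volume.restrict (ball (y j) (τ * R j))ᶜ)
      ≤ ((ε / 2 : ℝ≥0) : ℝ≥0∞) := by
    intro j hjN
    have h1 : eLpNorm (fun x => (h - g) (x - y j)) p volume = eLpNorm (h - g) p volume := by
      have e1 : AEStronglyMeasurable (h - g) (volume : Measure (Eucl n)) := by
        exact hms.sub hgc.aestronglyMeasurable
      exact eLpNorm_comp_measurePreserving e1 (hmp j)
    rw [← eLpNorm_indicator_eq_eLpNorm_restrict measurableSet_ball.compl]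
    refine le_trans (eLpNorm_mono fun x => ?_) (h1.le.trans hge)
    by_cases hx : x ∈ (ball (y j) (τ * R j))ᶜ
    · rw [Set.indicator_of_mem hx]
      have : g (x - y j) = 0 := by
        by_contra hne
        have h1 := hρ2 (subset_tsupport g hne)
        apply hx
        rw [mem_ball_zero_iff] at h1
        rw [mem_ball, dist_eq_norm]
        exact h1.trans_le ((le_max_right _ _).trans ((hN j hjN).trans (hτR j)))
      simp [hhj, this]
    · rw [Set.indicator_of_notMem hx]; simp
  -- pigeonhole
  have hmem : ∀ j : ℕ, ∃ s : 𝒞, ∃ hu2 : MemLp (Ω.indicator (w (N + j))) 2 (volume : Measure (Eucl n)),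
      WOp FP a ha Ω (w (N + j)) hu2 ∈ (s : Set (Eucl n → ℂ)) := by
    intro j
    have e := hwind (N + j) (Nat.le_add_right _ _)
    have hu2 : MemLp (Ω.indicator (w (N + j))) 2 (volume : Measure (Eucl n)) := by
      rw [e]; exact (hwg _).memLp 2
    obtain ⟨s, hs, hs2⟩ := hcov (w (N + j)) hu2 (by rw [e]; exact (hwg _).memLp p)
      (by rw [e, hwn]; exact hv1)
    exact ⟨⟨s, hs⟩, hu2, hs2⟩
  choose S hS2 hS using hmem
  obtain ⟨j', k', hjk, hSeq⟩ := Finite.exists_ne_map_eq_of_infinite S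
  have hW : ∀ i, WOp FP a ha Ω (w (N + i)) (hS2 i) =ᵐ[volume] Ω.indicator (hj (N + i)) := by
    intro i
    unfold WOp
    have e := hwind (N + i) (Nat.le_add_right _ _)
    have e2 : (hS2 i).toLp _ = ((hwg (N + i)).memLp 2).toLp _ := by
      rw [MemLp.toLp_eq_toLp_iff, e]
    rw [e2]
    have := symbOp_ae FP ha (hwg (N + i)) ((hwg (N + i)).memLp 2)
    have e3 : symbOp a (w (N + i)) = hj (N + i) := symbOp_trans a (y (N + i)) v
    rw [e3] at this
    filter_upwards [this] with x hx
    by_cases hxΩ : x ∈ Ω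
    · rw [Set.indicator_of_mem hxΩ, Set.indicator_of_mem hxΩ]; exact hx
    · rw [Set.indicator_of_notMem hxΩ, Set.indicator_of_notMem hxΩ]
  have hd := hdiam (S j') (S j').2 _ (hS j') _ (hSeq ▸ hS k')
  rw [eLpNorm_congr_ae ((hW j').sub (hW k'))] at hd
  set j := N + j'
  set k := N + k'
  have hjk2 : j ≠ k := by omega
  set B := ball (y j) (τ * R j) with hB
  have hBm : MeasurableSet B := measurableSet_ball
  have hdis : B ⊆ (ball (y k) (τ * R k))ᶜ := by
    intro x hx hx2
    have : x ∈ B ∩ ball (y k) (τ * R k) := ⟨hx, hx2⟩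
    rw [hdisj j k hjk2] at this
    exact this
  have hBd : eLpNorm (hj j - hj k) p (volume.restrict B) ≤ r := by
    rw [← eLpNorm_indicator_eq_eLpNorm_restrict hBm]
    refine le_trans (eLpNorm_mono fun x => ?_) hd
    by_cases hx : x ∈ B
    · have := hsub j hx
      simp [hx, this]
    · rw [Set.indicator_of_notMem hx]; simp
  calc eLpNorm h p volume = eLpNorm (hj j) p volume := (hjn j).symm
    _ = eLpNorm (B.indicator (hj j) + Bᶜ.indicator (hj j)) p volume := by
        rw [Set.indicator_self_add_compl]
    _ ≤ eLpNorm (B.indicator (hj j)) p volume + eLpNorm (Bᶜ.indicator (hj j)) p volume :=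
        eLpNorm_add_le ((hjm j).indicator hBm) ((hjm j).indicator hBm.compl) hp1
    _ = eLpNorm ((hj j - hj k) + hj k) p (volume.restrict B) +
          eLpNorm (hj j) p (volume.restrict Bᶜ) := by
        rw [eLpNorm_indicator_eq_eLpNorm_restrict hBm,
          eLpNorm_indicator_eq_eLpNorm_restrict hBm.compl, sub_add_cancel]
    _ ≤ (eLpNorm (hj j - hj k) p (volume.restrict B) + eLpNorm (hj k) p (volume.restrict B)) +
          eLpNorm (hj j) p (volume.restrict Bᶜ) := by
        gcongr
        exact eLpNorm_add_le ((hjm j).sub (hjm k)).restrict (hjm k).restrict hp1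
    _ ≤ (r + ((ε / 2 : ℝ≥0) : ℝ≥0∞)) + ((ε / 2 : ℝ≥0) : ℝ≥0∞) := by
        gcongr
        · exact (eLpNorm_mono_measure _ (Measure.restrict_mono hdis le_rfl)).trans
            (htail k (Nat.le_add_right _ _))
        · exact htail j (Nat.le_add_right _ _)
    _ = r + ε := by
        rw [add_assoc, ← ENNReal.coe_add, add_halves]
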